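/- arXiv:2503.01350 — 2 statements merged into one kernel-verified Lean document; each statement's English description precedes it below -/
import Mathlib

section
/- Let G be a finite connected simple graph on vertex set V with nonnegative edge weights w, let x̄ : V → {0,1} with nonempty facility set F = {k ∈ V : x̄(k) = 1}, and let i ∈ V. With the dual feasible set D of pairs (π, μ) — π : V ∪ {t} → ℝ, μ : V → ℝ, μ(k) ≥ 0 for all k, π(k) ≤ π(l) + w({k,l}) and π(l) ≤ π(k) + w({k,l}) for every edge {k,l} of G, and π(k) ≤ π(t) + μ(k) for every k ∈ V — and objective Φ(π,μ) = π(i) − π(t) − ∑_{k ∈ V} x̄(k)·μ(k), the supremum of Φ over D equals min_{j ∈ F} d_w(i,j), the distance from i to its nearest facility. -/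
open SimpleGraph

/-- The weighted distance between `i` and `j`: the infimum (`sInf` in `ℝ`) of the
weighted lengths of all walks from `i` to `j`. -/
noncomputable def gdist {V : Type*} (G : SimpleGraph V) (w : Sym2 V → ℝ) (i j : V) : ℝ :=
  sInf {L : ℝ | ∃ p : G.Walk i j, (p.edges.map w).sum = L}

/-!
The problem is a linear programming duality, with both halves elementary. Telescoping
`π k ≤ π l + w s(k, l)` along a walk from `i` to a facility `j` bounds `π i - π j` by the length of
the walk, and `π j - πt ≤ μ j` is at most the penalty subtracted in the objective; so no dual
feasible point exceeds the distance from `i` to any facility. Conversely, the distance to the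
nearest facility is itself a potential; taking it for both `π` and `μ`, with `πt = 0`, costs no
penalty because it vanishes on the facilities, where alone `x` is nonzero.
-/

section Potential

variable {V M : Type*} {G : SimpleGraph V}

/-- The weighted length of a walk: the sum of the weights of its edges, with multiplicity. -/
def weightedLength [AddMonoid M] (w : Sym2 V → M) {a b : V} (p : G.Walk a b) : M :=
  (p.edges.map w).sum

@[simp]
theorem weightedLength_nil [AddMonoid M] (w : Sym2 V → M) (a : V) :
    weightedLength w (Walk.nil : G.Walk a a) = 0 := rfl

@[simp]
theorem weightedLength_cons [AddMonoid M] (w : Sym2 V → M) {a b c : V} (h : G.Adj a b)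
    (p : G.Walk b c) : weightedLength w (Walk.cons h p) = w s(a, b) + weightedLength w p := by
  simp [weightedLength]

theorem weightedLength_nonneg [AddMonoid M] [Preorder M] [AddLeftMono M] {w : Sym2 V → M}
    (hw : ∀ e ∈ G.edgeSet, 0 ≤ w e) {a b : V} (p : G.Walk a b) : 0 ≤ weightedLength w p :=
  List.sum_nonneg <| List.forall_mem_map.2 fun e he => hw e (p.edges_subset_edgeSet he)

/-- Node potentials of a weighted graph, i.e. solutions of the constraints dual to the flow along
the edges. Since adjacency is symmetric, the single inequality stands for both orientations. -/
def IsPotential [Add M] [LE M] (G : SimpleGraph V) (w : Sym2 V → M) (π : V → M) : Prop :=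
  ∀ k l, G.Adj k l → π k ≤ π l + w s(k, l)

namespace IsPotential

theorem le_add_weightedLength [AddCommMonoid M] [Preorder M] [AddLeftMono M] {w : Sym2 V → M}
    {π : V → M} (hπ : IsPotential G w π) {a b : V} (p : G.Walk a b) :
    π a ≤ π b + weightedLength w p := by
  induction p with
  | nil => simp
  | @cons a b c hab q ih =>
    calc
      π a ≤ π b + w s(a, b) := hπ a b hab
      _ ≤ π c + weightedLength w q + w s(a, b) := by gcongr
      _ = π c + weightedLength w (Walk.cons hab q) := by
        rw [weightedLength_cons, add_assoc, add_comm (weightedLength w q)]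

theorem finset_inf' [Add M] [LinearOrder M] {w : Sym2 V → M} {ι : Type*} {s : Finset ι}
    (hs : s.Nonempty) {π : ι → V → M} (hπ : ∀ j ∈ s, IsPotential G w (π j)) :
    IsPotential G w fun k => s.inf' hs fun j => π j k := by
  intro k l hkl
  obtain ⟨j, hj, hmin⟩ := s.exists_mem_eq_inf' hs fun j => π j l
  calc
    s.inf' hs (fun j => π j k) ≤ π j k := s.inf'_le _ hj
    _ ≤ π j l + w s(k, l) := hπ j hj k l hkl
    _ = s.inf' hs (fun j => π j l) + w s(k, l) := by rw [hmin]

end IsPotential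

end Potential

section WeightedDistance

variable {V : Type*} {G : SimpleGraph V} {w : Sym2 V → ℝ}

theorem gdist_le_weightedLength (hw : ∀ e ∈ G.edgeSet, 0 ≤ w e) {a b : V} (p : G.Walk a b) :
    gdist G w a b ≤ weightedLength w p :=
  csInf_le ⟨0, Set.forall_mem_range.2 (weightedLength_nonneg hw)⟩ ⟨p, rfl⟩

-- For `b` unreachable from `a`, `gdist G w a b` is the junk value `sInf ∅ = 0`.
theorem le_gdist {a b : V} (hab : G.Reachable a b) {c : ℝ}
    (h : ∀ p : G.Walk a b, c ≤ weightedLength w p) : c ≤ gdist G w a b :=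
  have : Nonempty (G.Walk a b) := hab
  le_csInf (Set.range_nonempty _) (Set.forall_mem_range.2 h)

theorem gdist_nonneg (hw : ∀ e ∈ G.edgeSet, 0 ≤ w e) (a b : V) : 0 ≤ gdist G w a b :=
  Real.sInf_nonneg (Set.forall_mem_range.2 (weightedLength_nonneg hw))

theorem gdist_self (hw : ∀ e ∈ G.edgeSet, 0 ≤ w e) (a : V) : gdist G w a a = 0 :=
  le_antisymm (gdist_le_weightedLength hw Walk.nil) (gdist_nonneg hw a a)

theorem isPotential_gdist (hG : G.Preconnected) (hw : ∀ e ∈ G.edgeSet, 0 ≤ w e) (j : V) :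
    IsPotential G w fun k => gdist G w k j := by
  intro k l hkl
  rw [← sub_le_iff_le_add]
  refine le_gdist (hG l j) fun p => ?_
  rw [sub_le_iff_le_add']
  simpa only [weightedLength_cons] using gdist_le_weightedLength hw (Walk.cons hkl p)

theorem IsPotential.le_add_gdist {π : V → ℝ} (hπ : IsPotential G w π) {a b : V}
    (hab : G.Reachable a b) : π a ≤ π b + gdist G w a b := by
  rw [← sub_le_iff_le_add']
  exact le_gdist hab fun p => sub_le_iff_le_add'.2 (hπ.le_add_weightedLength p)

end WeightedDistance

section NearestFacility

variable {V : Type*} {G : SimpleGraph V} {w : Sym2 V → ℝ} {F : Finset V}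

theorem inf'_gdist_nonneg (hw : ∀ e ∈ G.edgeSet, 0 ≤ w e) (hF : F.Nonempty) (k : V) :
    0 ≤ F.inf' hF fun j => gdist G w k j :=
  F.le_inf' hF _ fun j _ => gdist_nonneg hw k j

theorem inf'_gdist_eq_zero (hw : ∀ e ∈ G.edgeSet, 0 ≤ w e) {k : V} (hk : k ∈ F) :
    F.inf' ⟨k, hk⟩ (fun j => gdist G w k j) = 0 :=
  le_antisymm ((F.inf'_le _ hk).trans_eq (gdist_self hw k)) (inf'_gdist_nonneg hw _ k)

theorem le_finsum_mul_of_one_le {x μ : V → ℝ} (hxF : ∀ k ∈ F, 1 ≤ x k) (hx0 : ∀ k ∉ F, x k = 0)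
    (hμ : ∀ k, 0 ≤ μ k) {j : V} (hj : j ∈ F) : μ j ≤ ∑ᶠ k, x k * μ k := by
  have hx : ∀ k, 0 ≤ x k := fun k => by
    by_cases hk : k ∈ F
    · exact zero_le_one.trans (hxF k hk)
    · exact (hx0 k hk).ge
  have hfin : (Function.support fun k => x k * μ k).Finite :=
    F.finite_toSet.subset fun k hk => by_contra fun hkF => hk (by simp [hx0 k hkF])
  calc
    μ j ≤ x j * μ j := le_mul_of_one_le_left (hμ j) (hxF j hj)
    _ ≤ ∑ᶠ k, x k * μ k := single_le_finsum j hfin fun k => mul_nonneg (hx k) (hμ k)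

theorem stmt10_general (hG : G.Preconnected) (hw : ∀ e ∈ G.edgeSet, 0 ≤ w e) {x : V → ℝ}
    (hxF : ∀ k ∈ F, 1 ≤ x k) (hx0 : ∀ k ∉ F, x k = 0) (hF : F.Nonempty) (i : V) :
    IsGreatest {y : ℝ | ∃ π : V → ℝ, ∃ πt : ℝ, ∃ μ : V → ℝ,
        (∀ k, 0 ≤ μ k) ∧ (∀ k l, G.Adj k l → π k ≤ π l + w s(k, l)) ∧
        (∀ k, π k ≤ πt + μ k) ∧ y = π i - πt - ∑ᶠ k, x k * μ k}
      (F.inf' hF fun j => gdist G w i j) := by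
  constructor
  · let δ : V → ℝ := fun k => F.inf' hF fun j => gdist G w k j
    have hpenalty : ∀ k, x k * δ k = 0 := fun k => by
      by_cases hk : k ∈ F
      · exact mul_eq_zero_of_right _ (inf'_gdist_eq_zero hw hk)
      · exact mul_eq_zero_of_left (hx0 k hk) _
    have hδ : IsPotential G w δ := .finset_inf' hF fun j _ => isPotential_gdist hG hw j
    exact ⟨δ, 0, δ, inf'_gdist_nonneg hw hF, hδ, fun k => (zero_add (δ k)).ge, by
      simp only [hpenalty, finsum_zero, sub_zero, δ]⟩
  · rintro _ ⟨π, πt, μ, hμ, hπ, hsink, rfl⟩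
    refine F.le_inf' hF _ fun j hj => ?_
    have hdist : π i ≤ π j + gdist G w i j := IsPotential.le_add_gdist hπ (hG i j)
    have hpenalty : μ j ≤ ∑ᶠ k, x k * μ k := le_finsum_mul_of_one_le hxF hx0 hμ hj
    linarith [hsink j]

end NearestFacility

/-- The supremum of the dual objective `Φ(π,μ) = π i - π t - ∑ k, x̄ k * μ k` over the
dual feasible set equals the distance from `i` to its nearest facility. Here `π t`
is modelled as a separate real variable `πt` for the auxiliary sink `t`. -/
theorem stmt10 {V : Type*} [Fintype V] (G : SimpleGraph V) (hG : G.Connected)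
    (w : Sym2 V → ℝ) (hw : ∀ e ∈ G.edgeSet, 0 ≤ w e)
    (x : V → ℝ) (hx01 : ∀ k, x k = 0 ∨ x k = 1)
    (F : Finset V) (hFx : ∀ k, k ∈ F ↔ x k = 1) (hF : F.Nonempty) (i : V) :
    sSup {y : ℝ | ∃ π : V → ℝ, ∃ πt : ℝ, ∃ μ : V → ℝ,
        (∀ k, 0 ≤ μ k) ∧ (∀ k l, G.Adj k l → π k ≤ π l + w s(k, l)) ∧
        (∀ k, π k ≤ πt + μ k) ∧ y = π i - πt - ∑ k : V, x k * μ k} =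
      F.inf' hF (fun j => gdist G w i j) := by
  have hxF : ∀ k ∈ F, 1 ≤ x k := fun k hk => ((hFx k).1 hk).ge
  have hx0 : ∀ k ∉ F, x k = 0 := fun k hk => (hx01 k).resolve_right (mt (hFx k).2 hk)
  simpa only [finsum_eq_sum_of_fintype] using
    (stmt10_general hG.preconnected hw hxF hx0 hF i).csSup_eq
end

section
/- Let G be a finite connected simple graph on vertex set V with |V| = n, with nonnegative base edge lengths ℓ and nonnegative upper bounds u on the edges, and let 1 ≤ p ≤ n. For a vertex k ∈ V, let M_k be the (n−p+1)-th smallest value of the list (d_{ℓ+u}(k,j))_{j ∈ V} sorted in nondecreasing order, where d_{ℓ+u} is the weighted distance with all edges downgraded to their maximum. Then for every facility set X ⊆ V with |X| = p and every downgrade γ with 0 ≤ γ_e ≤ u_e on each edge e, the distance from k to its nearest facility after the downgrade satisfies min_{j ∈ X} d_{ℓ+γ}(k,j) ≤ M_k; that is, M_k is a valid big-M value for the constraint π(k) ≤ M_k·(1 − x(k)). -/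
open SimpleGraph

/-! Since `γ ≤ u`, passing from `ℓ + γ` to `ℓ + u` can only lengthen distances, so it suffices to
find a facility within `M_k` of `k` for `d_{ℓ+u}`. At least `n - p + 1` vertices lie within `M_k`
of `k`, and `(n - p + 1) + p > n`, so one of them belongs to the `p`-element set `X`. -/

section OrderStatistics

theorem lt_countP_le_getElem {α : Type*} [Preorder α] [DecidableLE α] {l : List α}
    (hl : l.SortedLE) {i : ℕ} (hi : i < l.length) : i < l.countP (· ≤ l[i]) := by
  have hprefix : (l.take (i + 1)).countP (· ≤ l[i]) = i + 1 := by
    rw [List.countP_eq_length.2, List.length_take_of_le hi]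
    intro x hx
    obtain ⟨m, hm, rfl⟩ := List.mem_take_iff_getElem.1 hx
    exact decide_eq_true (hl.getElem_le_getElem_of_le (by omega))
  calc
    i < (l.take (i + 1)).countP (· ≤ l[i]) := by omega
    _ ≤ l.countP (· ≤ l[i]) := (List.take_sublist _ _).countP_le

variable {ι α : Type*} [LinearOrder α]

theorem lt_card_filter_le_sort_getD (s : Finset ι) (f : ι → α) {i : ℕ} (hi : i < s.card) (d : α) :
    i < (s.filter fun j => f j ≤ ((s.val.map f).sort (· ≤ ·)).getD i d).card := by
  set l := (s.val.map f).sort (· ≤ ·) with hl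
  have hil : i < l.length := by simpa [hl] using hi
  rw [List.getD_eq_getElem _ _ hil]
  have hcount : l.countP (· ≤ l[i]) = (s.filter fun j => f j ≤ l[i]).card := by
    rw [← Multiset.coe_countP, Multiset.sort_eq, Multiset.countP_map]
    rfl
  exact hcount ▸ lt_countP_le_getElem (Multiset.pairwise_sort _ _).sortedLE hil

theorem exists_mem_le_sort_getD {s t : Finset ι} (hts : t ⊆ s) (ht : t.Nonempty) (f : ι → α)
    (d : α) : ∃ j ∈ t, f j ≤ ((s.val.map f).sort (· ≤ ·)).getD (s.card - t.card) d := by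
  classical
  set x := ((s.val.map f).sort (· ≤ ·)).getD (s.card - t.card) d
  have hpos : 0 < t.card := ht.card_pos
  have hle : t.card ≤ s.card := Finset.card_le_card hts
  have hbelow : s.card - t.card < (s.filter fun j => f j ≤ x).card :=
    lt_card_filter_le_sort_getD s f (by omega) d
  have hoverlap : s.card < t.card + (s.filter fun j => f j ≤ x).card := by omega
  obtain ⟨j, hj⟩ :=
    Finset.inter_nonempty_of_card_lt_card_add_card hts (Finset.filter_subset _ s) hoverlap
  rw [Finset.mem_inter, Finset.mem_filter] at hj
  exact ⟨j, hj.1, hj.2.2⟩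

end OrderStatistics

section WeightedDistance

variable {V : Type*} {G : SimpleGraph V} {w w' : Sym2 V → ℝ} {i j : V}

theorem gdist_le_sum_edges (hw : ∀ e ∈ G.edgeSet, 0 ≤ w e) (q : G.Walk i j) :
    gdist G w i j ≤ (q.edges.map w).sum := by
  refine csInf_le ⟨0, ?_⟩ ⟨q, rfl⟩
  rintro _ ⟨r, rfl⟩
  refine List.sum_nonneg (List.forall_mem_map.2 fun e he => ?_)
  exact hw e (r.edges_subset_edgeSet he)

theorem gdist_mono (hij : G.Reachable i j) (hw : ∀ e ∈ G.edgeSet, 0 ≤ w e)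
    (hww' : ∀ e ∈ G.edgeSet, w e ≤ w' e) : gdist G w i j ≤ gdist G w' i j := by
  refine le_csInf (hij.elim fun q => ⟨_, q, rfl⟩) ?_
  rintro _ ⟨r, rfl⟩
  calc
    gdist G w i j ≤ (r.edges.map w).sum := gdist_le_sum_edges hw r
    _ ≤ (r.edges.map w').sum :=
      List.sum_le_sum fun e he => hww' e (r.edges_subset_edgeSet he)

end WeightedDistance

/-- `M_k`, the `(n-p+1)`-th smallest of the distances `d_{ℓ+u}(k,j)`, `j ∈ V` (zero-indexed
position `n - p` of the sorted list), is a valid big-M: for every facility set `X` of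
cardinality `p` and every downgrade `γ` with `0 ≤ γ_e ≤ u_e`, the distance from `k` to
its nearest facility after the downgrade is at most `M_k`. -/
theorem stmt14 {V : Type*} [Fintype V] [DecidableEq V] (G : SimpleGraph V) (hG : G.Connected)
    (n : ℕ) (hn : Fintype.card V = n)
    (ℓ u : Sym2 V → ℝ)
    (hℓ : ∀ e ∈ G.edgeSet, 0 ≤ ℓ e) (hu : ∀ e ∈ G.edgeSet, 0 ≤ u e)
    (p : ℕ) (hp1 : 1 ≤ p) (hpn : p ≤ n) (k : V) (Mk : ℝ)
    (hMk : Mk = ((Finset.univ.val.map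
      (fun j => gdist G (fun e => ℓ e + u e) k j)).sort (· ≤ ·)).getD (n - p) 0) :
    ∀ X : Finset V, X.card = p → ∀ hXne : X.Nonempty,
      ∀ γ : Sym2 V → ℝ, (∀ e ∈ G.edgeSet, 0 ≤ γ e ∧ γ e ≤ u e) →
        X.inf' hXne (fun j => gdist G (fun e => ℓ e + γ e) k j) ≤ Mk := by
  intro X hX hXne γ hγ
  have hmono (j : V) :
      gdist G (fun e => ℓ e + γ e) k j ≤ gdist G (fun e => ℓ e + u e) k j :=
    gdist_mono (hG.preconnected k j) (fun e he => add_nonneg (hℓ e he) (hγ e he).1)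
      fun e he => add_le_add_right (hγ e he).2 _
  obtain ⟨j, hjX, hj⟩ := exists_mem_le_sort_getD X.subset_univ hXne
    (fun j => gdist G (fun e => ℓ e + u e) k j) 0
  rw [Finset.card_univ, hn, hX, ← hMk] at hj
  exact Finset.inf'_le_of_le _ hjX ((hmono j).trans hj)
end
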